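/- Let d ≥ 2, κ > 0, and let T₁, T₂ ⊂ ℝ^d be nondegenerate d-simplices with disjoint interiors sharing a common face F = T₁ ∩ T₂, each with shape parameter at most μ; set h := max{diam T₁, diam T₂}, |F| := H^{d−1}(F), and ω_F := int(T₁ ∪ T₂). There exist a constant C > 0 depending only on d and μ and a Lipschitz function φ*_F : ℝ^d → ℝ vanishing identically on ℝ^d ∖ ω_F such that: (i) ∫_F φ*_F dH^{d−1} = 1; (ii) ∫_{T_i} φ*_F · p = 0 for every affine function p : ℝ^d → ℝ and i = 1, 2; and (iii) ‖φ*_F‖_{E,ω_F} := (∫_{ω_F} |∇φ*_F|² + κ² ∫_{ω_F} (φ*_F)²)^{1/2} ≤ C |F|^{−1/2} max{h^{−1}, κ}^{1/2}. -/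

import Mathlib

open MeasureTheory Metric Set
open scoped ENNReal RealInnerProductSpace NNReal Classical

noncomputable section

abbrev Euc (d : ℕ) : Type := EuclideanSpace ℝ (Fin d)

/-- `T(ω)`: Lipschitz functions on `ℝ^d` vanishing identically outside `ω`. -/
def IsTest {d : ℕ} (ω : Set (Euc d)) (φ : Euc d → ℝ) : Prop :=
  (∃ L : ℝ≥0, LipschitzWith L φ) ∧ ∀ x ∉ ω, φ x = 0

/-- `∫_ω |∇φ|²`. -/
def gradSq {d : ℕ} (ω : Set (Euc d)) (φ : Euc d → ℝ) : ℝ :=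
  ∫ x in ω, ‖gradient φ x‖ ^ 2

/-- `∫_ω φ²`. -/
def sqIntg {d : ℕ} (ω : Set (Euc d)) (φ : Euc d → ℝ) : ℝ :=
  ∫ x in ω, (φ x) ^ 2

/-- squared energy norm `‖φ‖_{E,ω}² = ∫_ω |∇φ|² + κ² ∫_ω φ²`. -/
def energySq {d : ℕ} (κ : ℝ) (ω : Set (Euc d)) (φ : Euc d → ℝ) : ℝ :=
  gradSq ω φ + κ ^ 2 * sqIntg ω φ

/-- local dual norm `‖Λ‖_{*,ω} = sup {Λφ : φ ∈ T(ω), ‖φ‖_{E,ω} ≤ 1}`. -/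
def dualNorm {d : ℕ} (κ : ℝ) (ω : Set (Euc d)) (Λ : (Euc d → ℝ) → ℝ) : ℝ≥0∞ :=
  ⨆ φ ∈ {φ : Euc d → ℝ | IsTest ω φ ∧ energySq κ ω φ ≤ 1}, ENNReal.ofReal (Λ φ)

/-- inradius: supremum of radii of balls contained in `s`. -/
def inradius {d : ℕ} (s : Set (Euc d)) : ℝ :=
  sSup {r : ℝ | ∃ c, Metric.ball c r ⊆ s}

/-- the simplex spanned by an affine basis. -/
def simT {d : ℕ} (B : AffineBasis (Fin (d+1)) ℝ (Euc d)) : Set (Euc d) :=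
  convexHull ℝ (Set.range ⇑B)

/-- the face of the simplex opposite to the vertex `z`. -/
def simFace {d : ℕ} (B : AffineBasis (Fin (d+1)) ℝ (Euc d)) (z : Fin (d+1)) : Set (Euc d) :=
  convexHull ℝ (⇑B '' {y | y ≠ z})

/-- the standard `d`-simplex. -/
def Δstd (d : ℕ) : Set (Euc d) := {x | (∀ i, 0 ≤ x i) ∧ ∑ i, x i ≤ 1}

/-- the element bubble of the standard simplex. -/
def elemBubble (d : ℕ) (x : Euc d) : ℝ := (1 - ∑ i, x i) * ∏ i, x i

/-!
In orthonormal coordinates `(t, w) ∈ ℝ × ℝ^(d-1)` centred at the barycenter of the common face, with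
`t` normal to it, the two simplices coincide with the half-spaces `0 ≤ t` and `t ≤ 0` on a ball
whose radius is comparable to `h`: every barycentric coordinate not vanishing on the face is at
least `1/d` at the barycenter and is Lipschitz with constant `2 / inradius`. In place of a face
bubble corrected by element dual functions one can therefore take the normalized product of a cone
in `w / ρ` and an even profile in `t / δ` whose zeroth and first moments vanish on each half-line.
The moment conditions give the orthogonality to affine functions on each simplex separately, and
the choice `δ⁻¹ = max ρ⁻¹ κ` with `ρ` comparable to `h` balances the two energy terms.
-/

/-- The even profile supported in `[-1, 1]` that equals `(1 - s) * (1 - 8 * s + 10 * s ^ 2)` at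
`s = |t| ≤ 1`. The quadratic factor is chosen so that the moments of order zero and one over each
half-line vanish. -/
def momentProfile (t : ℝ) : ℝ :=
  (1 - min |t| 1) * (1 - 8 * min |t| 1 + 10 * min |t| 1 ^ 2)

namespace momentProfile

lemma apply_zero : momentProfile 0 = 1 := by simp [momentProfile]

lemma apply_neg (t : ℝ) : momentProfile (-t) = momentProfile t := by simp [momentProfile]

lemma eq_zero_of_one_le_abs {t : ℝ} (ht : 1 ≤ |t|) : momentProfile t = 0 := by
  simp [momentProfile, min_eq_right ht]

lemma eq_of_mem_Icc {t : ℝ} (ht : t ∈ Icc (0 : ℝ) 1) :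
    momentProfile t = (1 - t) * (1 - 8 * t + 10 * t ^ 2) := by
  simp [momentProfile, abs_of_nonneg ht.1, min_eq_left ht.2]

lemma abs_le_one (t : ℝ) : |momentProfile t| ≤ 1 := by
  have hs₀ : 0 ≤ min |t| 1 := le_min (abs_nonneg t) zero_le_one
  have hs₁ : min |t| 1 ≤ 1 := min_le_right _ _
  unfold momentProfile
  generalize min |t| 1 = s at hs₀ hs₁ ⊢
  rw [abs_le]
  constructor
  · nlinarith [mul_nonneg hs₀ (sq_nonneg (s - 1)), sq_nonneg (3 * s - 1),
      mul_nonneg (sub_nonneg.2 hs₁) (sq_nonneg (3 * s - 1))]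
  · nlinarith [mul_nonneg hs₀ (sq_nonneg (10 * s - 9))]

lemma lipschitzWith : LipschitzWith 9 momentProfile := by
  refine LipschitzWith.of_dist_le' (K := 9) (fun t u ↦ ?_) |>.weaken (by norm_num)
  have htrunc : |min |t| 1 - min |u| 1| ≤ |t - u| :=
    (abs_min_sub_min_le_max _ _ _ _).trans (by simpa using abs_abs_sub_abs_le t u)
  have hs₀ : 0 ≤ min |t| 1 := le_min (abs_nonneg t) zero_le_one
  have hs₁ : min |t| 1 ≤ 1 := min_le_right _ _
  have hr₀ : 0 ≤ min |u| 1 := le_min (abs_nonneg u) zero_le_one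
  have hr₁ : min |u| 1 ≤ 1 := min_le_right _ _
  unfold momentProfile
  generalize min |t| 1 = s at *
  generalize min |u| 1 = r at *
  have hquotient : |-9 + 18 * (s + r) - 10 * (s ^ 2 + s * r + r ^ 2)| ≤ 9 := by
    rw [abs_le]
    constructor
    · nlinarith [mul_nonneg hs₀ (sub_nonneg.2 hs₁), mul_nonneg hr₀ (sub_nonneg.2 hr₁),
        mul_nonneg hs₀ (sub_nonneg.2 hr₁), mul_nonneg hr₀ (sub_nonneg.2 hs₁)]
    · nlinarith [sq_nonneg (s - r), sq_nonneg (5 * (s + r) - 6)]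
  calc dist ((1 - s) * (1 - 8 * s + 10 * s ^ 2)) ((1 - r) * (1 - 8 * r + 10 * r ^ 2))
      = |-9 + 18 * (s + r) - 10 * (s ^ 2 + s * r + r ^ 2)| * |s - r| := by
        rw [Real.dist_eq, ← abs_mul]; congr 1; ring
    _ ≤ 9 * dist t u := mul_le_mul hquotient htrunc (abs_nonneg _) (by norm_num)

lemma integral_zero_one_mul_affine (α β : ℝ) :
    ∫ t in (0 : ℝ)..1, momentProfile t * (α + β * t) = 0 := by
  have hpoly : ∀ t ∈ uIcc (0 : ℝ) 1, momentProfile t * (α + β * t)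
      = (1 - t) * (1 - 8 * t + 10 * t ^ 2) * (α + β * t) := fun t ht ↦ by
    rw [eq_of_mem_Icc (uIcc_of_le (zero_le_one' ℝ) ▸ ht)]
  let P : ℝ → ℝ := fun t ↦ α * (t - 9 / 2 * t ^ 2 + 6 * t ^ 3 - 5 / 2 * t ^ 4)
    + β * (1 / 2 * t ^ 2 - 3 * t ^ 3 + 9 / 2 * t ^ 4 - 2 * t ^ 5)
  have hderiv : ∀ t : ℝ,
      HasDerivAt P ((1 - t) * (1 - 8 * t + 10 * t ^ 2) * (α + β * t)) t := fun t ↦ by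
    have hpow (n : ℕ) := hasDerivAt_pow n t
    have hα := (((hasDerivAt_id t).sub ((hpow 2).const_mul (9 / 2))).add
      ((hpow 3).const_mul 6)).sub ((hpow 4).const_mul (5 / 2))
    have hβ := ((((hpow 2).const_mul (1 / 2)).sub ((hpow 3).const_mul 3)).add
      ((hpow 4).const_mul (9 / 2))).sub ((hpow 5).const_mul 2)
    exact ((hα.const_mul α).add (hβ.const_mul β)).congr_deriv (by push_cast; ring)
  rw [intervalIntegral.integral_congr hpoly,
    intervalIntegral.integral_eq_sub_of_hasDerivAt (fun t _ ↦ hderiv t)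
      (Continuous.intervalIntegrable (by fun_prop) _ _)]
  simp only [P]
  ring

lemma integral_Ioi_mul_affine (α β : ℝ) :
    ∫ t in Ioi (0 : ℝ), momentProfile t * (α + β * t) = 0 := by
  have hunit := integral_zero_one_mul_affine α β
  rw [intervalIntegral.integral_of_le zero_le_one] at hunit
  refine (setIntegral_eq_of_subset_of_forall_sdiff_eq_zero measurableSet_Ioi
    Ioc_subset_Ioi_self ?_).trans hunit
  rintro t ⟨ht₀, ht₁⟩
  have : 1 ≤ |t| := (not_le.1 fun h ↦ ht₁ ⟨ht₀, h⟩).le.trans (le_abs_self t)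
  rw [eq_zero_of_one_le_abs this, zero_mul]

lemma integral_Ici_div_mul_affine {δ : ℝ} (hδ : 0 < δ) (α β : ℝ) :
    ∫ t in Ici (0 : ℝ), momentProfile (t / δ) * (α + β * t) = 0 := by
  have hscale := integral_comp_mul_left_Ioi
    (fun s ↦ momentProfile s * (α + β * δ * s)) 0 (inv_pos.2 hδ)
  rw [mul_zero, integral_Ioi_mul_affine, smul_zero] at hscale
  rw [integral_Ici_eq_integral_Ioi, ← hscale]
  congr with t
  field_simp

lemma integral_Iic_div_mul_affine {δ : ℝ} (hδ : 0 < δ) (α β : ℝ) :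
    ∫ t in Iic (0 : ℝ), momentProfile (t / δ) * (α + β * t) = 0 := by
  have hreflect := integral_comp_neg_Iic 0 fun t ↦ momentProfile (t / δ) * (α + -β * t)
  rw [neg_zero, ← integral_Ici_eq_integral_Ioi, integral_Ici_div_mul_affine hδ] at hreflect
  simpa only [neg_div, apply_neg, neg_mul_neg] using hreflect

end momentProfile

/-- The unit cone bump, the tangential cut-off factor of the dual function. -/
def cone {W : Type*} [NormedAddCommGroup W] (w : W) : ℝ := max 0 (1 - ‖w‖)

namespace cone

section NormedAddCommGroup

variable {W : Type*} [NormedAddCommGroup W]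

lemma apply_zero : cone (0 : W) = 1 := by simp [cone]

lemma nonneg (w : W) : 0 ≤ cone w := le_max_left _ _

lemma le_one (w : W) : cone w ≤ 1 := max_le zero_le_one (by simp)

lemma eq_zero_of_one_le_norm {w : W} (hw : 1 ≤ ‖w‖) : cone w = 0 :=
  max_eq_left (sub_nonpos.2 hw)

lemma lipschitzWith : LipschitzWith 1 (cone : W → ℝ) :=
  (show LipschitzWith 1 fun w : W ↦ 1 - ‖w‖ from
    LipschitzWith.of_dist_le_mul fun v w ↦ by
      simpa [Real.dist_eq, dist_eq_norm, abs_sub_comm] using abs_norm_sub_norm_le v w).const_max 0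

lemma hasCompactSupport [ProperSpace W] : HasCompactSupport (cone : W → ℝ) :=
  .intro (isCompact_closedBall 0 1) fun w hw ↦
    eq_zero_of_one_le_norm <| by simpa using (not_le.1 (mt mem_closedBall.2 hw)).le

end NormedAddCommGroup

variable {W : Type*} [NormedAddCommGroup W] [NormedSpace ℝ W] [FiniteDimensional ℝ W]
  [MeasurableSpace W] [BorelSpace W] (ν : Measure W) [ν.IsAddHaarMeasure]

lemma integral_pos : 0 < ∫ w : W, cone w ∂ν :=
  lipschitzWith.continuous.integral_pos_of_hasCompactSupport_nonneg_nonzero hasCompactSupport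
    nonneg (x := 0) (by simp [apply_zero])

lemma integral_inv_smul {ρ : ℝ} (hρ : 0 ≤ ρ) :
    ∫ w : W, cone (ρ⁻¹ • w) ∂ν = ρ ^ Module.finrank ℝ W * ∫ w : W, cone w ∂ν :=
  Measure.integral_comp_inv_smul_of_nonneg ν _ hρ

end cone

section SliceIntegrals

lemma setIntegral_prod_univ_eq_zero {α β : Type*} [MeasurableSpace α] [MeasurableSpace β]
    {μ : Measure α} {ν : Measure β} [SFinite μ] [SFinite ν] {s : Set α} {f : α × β → ℝ}
    (hf : ∀ b, ∫ a in s, f (a, b) ∂μ = 0) : ∫ z in s ×ˢ univ, f z ∂μ.prod ν = 0 := by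
  rw [← Measure.prod_restrict, Measure.restrict_univ]
  by_cases hint : Integrable f ((μ.restrict s).prod ν)
  · simp [integral_prod_symm f hint, hf]
  · exact integral_undef hint

lemma setIntegral_range_hausdorffMeasure {X Y : Type*} [MetricSpace X] [MetricSpace Y]
    [CompleteSpace X] [MeasurableSpace X] [BorelSpace X] [MeasurableSpace Y] [BorelSpace Y]
    {g : X → Y} (hg : Isometry g) {s : ℝ} (hs : 0 ≤ s) (f : Y → ℝ) :
    ∫ y in range g, f y ∂μH[s] = ∫ x, f (g x) ∂μH[s] := by
  rw [← hg.map_hausdorffMeasure (.inl hs)]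
  exact hg.isClosedEmbedding.measurableEmbedding.integral_map f

end SliceIntegrals

/-- The product bump on the model space `ℝ × W`: the squeezed profile of width `δ` in the normal
direction times the cone of radius `ρ` in the tangential directions. -/
def layerBump {W : Type*} [NormedAddCommGroup W] [NormedSpace ℝ W] (δ ρ : ℝ)
    (z : WithLp 2 (ℝ × W)) : ℝ :=
  momentProfile (z.fst / δ) * cone (ρ⁻¹ • z.snd)

namespace layerBump

lemma abs_fst_div_sub_le {W : Type*} [NormedAddCommGroup W] {δ : ℝ} (hδ : 0 < δ)
    (z w : WithLp 2 (ℝ × W)) :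
    |z.fst / δ - w.fst / δ| ≤ ‖z - w‖ / δ := by
  rw [← sub_div, abs_div, abs_of_pos hδ]
  gcongr
  exact WithLp.norm_fst_le _ (z - w)

section NormedSpace

variable {W : Type*} [NormedAddCommGroup W] [NormedSpace ℝ W] {δ ρ : ℝ}

lemma abs_le_one (δ ρ : ℝ) (z : WithLp 2 (ℝ × W)) : |layerBump δ ρ z| ≤ 1 := by
  rw [layerBump, abs_mul, abs_of_nonneg (cone.nonneg _)]
  exact mul_le_one₀ (momentProfile.abs_le_one _) (cone.nonneg _) (cone.le_one _)

lemma abs_fst_lt_and_norm_snd_lt_of_ne_zero (hδ : 0 < δ) (hρ : 0 < ρ) {z : WithLp 2 (ℝ × W)}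
    (hz : layerBump δ ρ z ≠ 0) : |z.fst| < δ ∧ ‖z.snd‖ < ρ := by
  obtain ⟨hprofile, hcone⟩ := mul_ne_zero_iff.1 hz
  have hfst := mt momentProfile.eq_zero_of_one_le_abs hprofile
  have hsnd := mt cone.eq_zero_of_one_le_norm hcone
  rw [abs_div, abs_of_pos hδ, one_le_div hδ] at hfst
  rw [norm_smul, norm_inv, Real.norm_of_nonneg hρ.le, inv_mul_eq_div, one_le_div hρ] at hsnd
  exact ⟨not_le.1 hfst, not_le.1 hsnd⟩

lemma norm_inv_smul_snd_sub_le (hδ : 0 < δ) (hδρ : δ ≤ ρ) (z w : WithLp 2 (ℝ × W)) :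
    ‖ρ⁻¹ • z.snd - ρ⁻¹ • w.snd‖ ≤ ‖z - w‖ / δ := by
  rw [← smul_sub, norm_smul, norm_inv, Real.norm_of_nonneg (hδ.le.trans hδρ), inv_mul_eq_div]
  gcongr
  exact WithLp.norm_snd_le _ (z - w)

lemma lipschitzWith (hδ : 0 < δ) (hδρ : δ ≤ ρ) :
    LipschitzWith (10 / δ).toNNReal (layerBump δ ρ : WithLp 2 (ℝ × W) → ℝ) := by
  refine LipschitzWith.of_dist_le' fun z w ↦ ?_
  have hprofile := (momentProfile.lipschitzWith.dist_le_mul (z.fst / δ) (w.fst / δ)).trans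
    (mul_le_mul_of_nonneg_left (abs_fst_div_sub_le hδ z w) (by norm_num))
  have hcone := (cone.lipschitzWith.dist_le_mul (ρ⁻¹ • z.snd) (ρ⁻¹ • w.snd)).trans
    (mul_le_mul_of_nonneg_left ((dist_eq_norm _ _).trans_le
      (norm_inv_smul_snd_sub_le hδ hδρ z w)) (by norm_num))
  have hleibniz : layerBump δ ρ z - layerBump δ ρ w
      = (momentProfile (z.fst / δ) - momentProfile (w.fst / δ)) * cone (ρ⁻¹ • z.snd)
        + momentProfile (w.fst / δ) * (cone (ρ⁻¹ • z.snd) - cone (ρ⁻¹ • w.snd)) := by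
    unfold layerBump; ring
  calc dist (layerBump δ ρ z) (layerBump δ ρ w)
      ≤ |momentProfile (z.fst / δ) - momentProfile (w.fst / δ)| * |cone (ρ⁻¹ • z.snd)|
        + |momentProfile (w.fst / δ)| * |cone (ρ⁻¹ • z.snd) - cone (ρ⁻¹ • w.snd)| := by
        rw [Real.dist_eq, hleibniz, ← abs_mul, ← abs_mul]; exact abs_add_le _ _
    _ ≤ 9 * (‖z - w‖ / δ) * 1 + 1 * (1 * (‖z - w‖ / δ)) := by
        gcongr
        · exact hprofile
        · exact (abs_of_nonneg (cone.nonneg _)).trans_le (cone.le_one _)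
        · exact momentProfile.abs_le_one _
        · exact hcone
    _ = 10 / δ * dist z w := by rw [dist_eq_norm]; ring

end NormedSpace

variable {W : Type*} [NormedAddCommGroup W] [InnerProductSpace ℝ W] [FiniteDimensional ℝ W]
  [MeasurableSpace W] [BorelSpace W] {δ ρ : ℝ}

lemma setIntegral_fst_preimage_mul_affine_eq_zero {I : Set ℝ}
    (hI : ∀ α β : ℝ, ∫ t in I, momentProfile (t / δ) * (α + β * t) = 0)
    (p : WithLp 2 (ℝ × W) →ᵃ[ℝ] ℝ) :
    ∫ z in {z : WithLp 2 (ℝ × W) | z.fst ∈ I}, layerBump δ ρ z * p z = 0 := by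
  have haffine (t : ℝ) (w : W) : p (WithLp.toLp 2 (t, w))
      = p (WithLp.toLp 2 (0, w)) + p.linear (WithLp.toLp 2 (1, 0)) * t := by
    have hsplit : WithLp.toLp 2 (t, w)
        = t • WithLp.toLp 2 ((1 : ℝ), (0 : W)) +ᵥ WithLp.toLp 2 ((0 : ℝ), w) := by
      simp [← WithLp.toLp_smul, ← WithLp.toLp_add]
    rw [hsplit, p.map_vadd, map_smul, vadd_eq_add, smul_eq_mul, add_comm, mul_comm]
  rw [← (WithLp.volume_preserving_toLp ℝ W).setIntegral_preimage_emb
    (MeasurableEquiv.toLp 2 (ℝ × W)).measurableEmbedding]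
  have hpreimage : WithLp.toLp 2 ⁻¹' {z : WithLp 2 (ℝ × W) | z.fst ∈ I} = I ×ˢ univ := by
    ext; simp
  rw [hpreimage, Measure.volume_eq_prod]
  refine setIntegral_prod_univ_eq_zero fun w ↦ ?_
  calc ∫ t in I, layerBump δ ρ (WithLp.toLp 2 (t, w)) * p (WithLp.toLp 2 (t, w))
      = ∫ t in I, cone (ρ⁻¹ • w) * (momentProfile (t / δ)
          * (p (WithLp.toLp 2 (0, w)) + p.linear (WithLp.toLp 2 (1, 0)) * t)) := by
        congr with t
        rw [haffine t w, layerBump, WithLp.toLp_fst, WithLp.toLp_snd]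
        ring
    _ = 0 := by rw [integral_const_mul, hI, mul_zero]

lemma setIntegral_fst_eq_zero (hρ : 0 ≤ ρ) :
    ∫ z in {z : WithLp 2 (ℝ × W) | z.fst = 0}, layerBump δ ρ z ∂μH[(Module.finrank ℝ W : ℝ)]
      = ρ ^ Module.finrank ℝ W * ∫ w : W, cone w ∂μH[(Module.finrank ℝ W : ℝ)] := by
  have hisometry : Isometry fun w : W ↦ WithLp.toLp 2 ((0 : ℝ), w) :=
    Isometry.of_dist_eq fun v w ↦ by simp
  have hrange : range (fun w : W ↦ WithLp.toLp 2 ((0 : ℝ), w)) = {z | z.fst = 0} := by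
    refine Subset.antisymm (range_subset_iff.2 fun w ↦ WithLp.toLp_fst _) fun z hz ↦ ⟨z.snd, ?_⟩
    exact congrArg (WithLp.toLp 2) (Prod.ext hz.symm rfl)
  rw [← hrange, setIntegral_range_hausdorffMeasure hisometry (Nat.cast_nonneg _),
    ← cone.integral_inv_smul _ hρ]
  simp [layerBump, momentProfile.apply_zero]

end layerBump

lemma volume_real_box {W : Type*} [NormedAddCommGroup W] [InnerProductSpace ℝ W]
    [FiniteDimensional ℝ W] [MeasurableSpace W] [BorelSpace W] {δ ρ : ℝ} (hδ : 0 ≤ δ) (hρ : 0 ≤ ρ) :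
    volume.real {z : WithLp 2 (ℝ × W) | |z.fst| ≤ δ ∧ ‖z.snd‖ ≤ ρ}
      = 2 * δ * (ρ ^ Module.finrank ℝ W * volume.real (ball (0 : W) 1)) := by
  have hpreimage : WithLp.toLp 2 ⁻¹' {z : WithLp 2 (ℝ × W) | |z.fst| ≤ δ ∧ ‖z.snd‖ ≤ ρ}
      = Icc (-δ) δ ×ˢ closedBall (0 : W) ρ := by
    ext; simp [abs_le]
  rw [measureReal_def, ← (WithLp.volume_preserving_toLp ℝ W).measure_preimage_emb
    (MeasurableEquiv.toLp 2 (ℝ × W)).measurableEmbedding, hpreimage, ← measureReal_def,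
    Measure.volume_eq_prod, measureReal_prod_prod, Real.volume_real_Icc_of_le (by linarith),
    Measure.addHaar_real_closedBall _ _ hρ]
  ring

section Energy

variable {d : ℕ} {φ : Euc d → ℝ}

lemma norm_gradient_le_of_lipschitzWith {L : ℝ≥0} (hφ : LipschitzWith L φ) (x : Euc d) :
    ‖gradient φ x‖ ≤ L := by
  rw [gradient, LinearIsometryEquiv.norm_map]
  exact norm_fderiv_le_of_lipschitz ℝ hφ

lemma setIntegral_le_mul_measureReal_of_eq_zero_off {X : Type*} [MeasurableSpace X]
    {ν : Measure X} {f : X → ℝ} {ω K : Set X} {M : ℝ} (hω : MeasurableSet ω)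
    (hKfin : ν K < ∞) (hM : 0 ≤ M) (hle : ∀ x, f x ≤ M) (hnonneg : ∀ x, 0 ≤ f x)
    (hzero : ∀ x ∉ K, f x = 0) :
    ∫ x in ω, f x ∂ν ≤ M * ν.real K := by
  calc ∫ x in ω, f x ∂ν = ∫ x in ω ∩ K, f x ∂ν :=
        (setIntegral_eq_of_subset_of_forall_sdiff_eq_zero hω inter_subset_left
          fun x hx ↦ hzero x fun hxK ↦ hx.2 ⟨hx.1, hxK⟩)
    _ ≤ ‖∫ x in ω ∩ K, f x ∂ν‖ := Real.le_norm_self _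
    _ ≤ M * ν.real (ω ∩ K) := norm_setIntegral_le_of_norm_le_const
        ((measure_mono inter_subset_right).trans_lt hKfin)
        fun x _ ↦ (Real.norm_of_nonneg (hnonneg x)).trans_le (hle x)
    _ ≤ M * ν.real K := by gcongr; exacts [hKfin.ne, inter_subset_right]

lemma energySq_le_mul_volume_real {L : ℝ≥0} {M κ : ℝ} {ω K : Set (Euc d)}
    (hφ : LipschitzWith L φ) (hM : ∀ x, |φ x| ≤ M) (hω : MeasurableSet ω) (hK : IsClosed K)
    (hKfin : volume K < ∞) (hzero : ∀ x ∉ K, φ x = 0) :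
    energySq κ ω φ ≤ (L ^ 2 + κ ^ 2 * M ^ 2) * volume.real K := by
  have hgradient_zero : ∀ x ∉ K, gradient φ x = 0 := fun x hx ↦ by
    have hlocal : φ =ᶠ[nhds x] fun _ ↦ 0 :=
      Filter.eventually_of_mem (hK.isOpen_compl.mem_nhds hx) hzero
    simpa using hlocal.gradient_eq
  have hgrad : gradSq ω φ ≤ L ^ 2 * volume.real K :=
    setIntegral_le_mul_measureReal_of_eq_zero_off hω hKfin (by positivity)
      (fun x ↦ by gcongr; exact norm_gradient_le_of_lipschitzWith hφ x) (fun x ↦ by positivity)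
      fun x hx ↦ by simp [hgradient_zero x hx]
  have hsq : sqIntg ω φ ≤ M ^ 2 * volume.real K :=
    setIntegral_le_mul_measureReal_of_eq_zero_off hω hKfin (by positivity)
      (fun x ↦ sq_le_sq' (abs_le.1 (hM x)).1 (abs_le.1 (hM x)).2) (fun x ↦ by positivity)
      fun x hx ↦ by simp [hzero x hx]
  calc energySq κ ω φ ≤ L ^ 2 * volume.real K + κ ^ 2 * (M ^ 2 * volume.real K) :=
        add_le_add hgrad (mul_le_mul_of_nonneg_left hsq (sq_nonneg κ))
    _ = (L ^ 2 + κ ^ 2 * M ^ 2) * volume.real K := by ring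

end Energy

lemma measurePreserving_affineIsometryEquiv {E F : Type*} [NormedAddCommGroup E]
    [InnerProductSpace ℝ E] [FiniteDimensional ℝ E] [MeasurableSpace E] [BorelSpace E]
    [NormedAddCommGroup F] [InnerProductSpace ℝ F] [FiniteDimensional ℝ F] [MeasurableSpace F]
    [BorelSpace F] (e : E ≃ᵃⁱ[ℝ] F) : MeasurePreserving e volume volume := by
  have hdecomp : ⇑e = (· + e 0) ∘ e.linearIsometryEquiv := by
    ext z
    simpa using e.map_vadd 0 z
  rw [hdecomp]
  exact (measurePreserving_add_right volume (e 0)).comp e.linearIsometryEquiv.measurePreserving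

lemma norm_symm_apply_eq_dist {E F : Type*} [SeminormedAddCommGroup E] [NormedSpace ℝ E]
    [SeminormedAddCommGroup F] [NormedSpace ℝ F] (e : E ≃ᵃⁱ[ℝ] F) (x : F) :
    ‖e.symm x‖ = dist x (e 0) := by
  rw [← dist_zero_right, ← e.dist_map, e.apply_symm_apply]

lemma continuous_symm_fst {E W : Type*} [NormedAddCommGroup E] [NormedSpace ℝ E]
    [NormedAddCommGroup W] [NormedSpace ℝ W] (e : WithLp 2 (ℝ × W) ≃ᵃⁱ[ℝ] E) :
    Continuous fun x ↦ (e.symm x).fst := by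
  have hsymm : Continuous e.symm := e.symm.continuous
  fun_prop

/-- The mass of the unit cone with respect to the `m`-dimensional Hausdorff measure, which
normalizes the face integral of `faceDual`. -/
def coneMass (m : ℕ) : ℝ := ∫ w : Euc m, cone w ∂μH[(m : ℝ)]

lemma coneMass_pos (m : ℕ) : 0 < coneMass m := cone.integral_pos _

/-- The normal width of the dual function at tangential scale `ρ`. It plays the role of `θ * h` for
the squeezing parameter `θ = min 1 (h * κ)⁻¹`. -/
def layerWidth (ρ κ : ℝ) : ℝ := (max ρ⁻¹ κ)⁻¹

namespace layerWidth

lemma pos {ρ : ℝ} (hρ : 0 < ρ) (κ : ℝ) : 0 < layerWidth ρ κ :=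
  inv_pos.2 (lt_max_of_lt_left (inv_pos.2 hρ))

lemma le_scale {ρ : ℝ} (hρ : 0 < ρ) (κ : ℝ) : layerWidth ρ κ ≤ ρ :=
  inv_le_of_inv_le₀ hρ (le_max_left _ _)

end layerWidth

/-- The dual function of the face `{x | (e.symm x).fst = 0}`: the layer bump in the orthonormal
coordinates `e`, normalized to have unit integral over the face. -/
def faceDual {m : ℕ} (e : WithLp 2 (ℝ × Euc m) ≃ᵃⁱ[ℝ] Euc (m + 1)) (ρ κ : ℝ)
    (x : Euc (m + 1)) : ℝ :=
  (ρ ^ m * coneMass m)⁻¹ * layerBump (layerWidth ρ κ) ρ (e.symm x)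

/-- The constant of the energy estimate `faceDual.energySq_le`: the factor `202 = 2 * (10 ^ 2 + 1)`
combines the Lipschitz constant `10 / δ` and the bound `1` of the layer bump on a layer of width
`2 * δ`. -/
def faceDualEnergyConst (m : ℕ) : ℝ := 202 * volume.real (ball (0 : Euc m) 1) / coneMass m ^ 2

lemma volume_real_unitBall_pos (m : ℕ) : 0 < volume.real (ball (0 : Euc m) 1) :=
  ENNReal.toReal_pos (measure_ball_pos _ _ one_pos).ne' measure_ball_lt_top.ne

lemma faceDualEnergyConst_pos (m : ℕ) : 0 < faceDualEnergyConst m :=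
  div_pos (mul_pos (by norm_num) (volume_real_unitBall_pos m)) (pow_pos (coneMass_pos m) 2)

namespace faceDual

variable {m : ℕ} (e : WithLp 2 (ℝ × Euc m) ≃ᵃⁱ[ℝ] Euc (m + 1)) {ρ : ℝ} (κ : ℝ)

lemma setIntegral_fst_preimage_mul_affine_eq_zero {I : Set ℝ}
    (hI : ∀ α β : ℝ, ∫ t in I, momentProfile (t / layerWidth ρ κ) * (α + β * t) = 0)
    (p : Euc (m + 1) →ᵃ[ℝ] ℝ) :
    ∫ x in {x | (e.symm x).fst ∈ I}, faceDual e ρ κ x * p x = 0 := by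
  rw [← (measurePreserving_affineIsometryEquiv e).setIntegral_preimage_emb
    e.toHomeomorph.measurableEmbedding]
  have hbump := layerBump.setIntegral_fst_preimage_mul_affine_eq_zero (ρ := ρ) hI
    (p.comp e.toAffineEquiv.toAffineMap)
  simp only [faceDual, mul_assoc, integral_const_mul, e.symm_apply_apply, preimage_ofPred_eq]
  exact mul_eq_zero_of_right _ hbump

lemma normalization_pos (m : ℕ) (hρ : 0 < ρ) : 0 < (ρ ^ m * coneMass m)⁻¹ :=
  inv_pos.2 (mul_pos (pow_pos hρ m) (coneMass_pos m))

lemma lipschitzWith (hρ : 0 < ρ) :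
    LipschitzWith ((ρ ^ m * coneMass m)⁻¹ * (10 / layerWidth ρ κ)).toNNReal (faceDual e ρ κ) := by
  have hδ := layerWidth.pos hρ κ
  have hbump := layerBump.lipschitzWith (W := Euc m) hδ (layerWidth.le_scale hρ κ)
  refine LipschitzWith.of_dist_le' fun x y ↦ ?_
  have hsymm := hbump.dist_le_mul (e.symm x) (e.symm y)
  rw [e.symm.dist_map, Real.coe_toNNReal _ (by positivity)] at hsymm
  rw [faceDual, faceDual, Real.dist_eq, ← mul_sub, abs_mul, abs_of_pos (normalization_pos m hρ),
    mul_assoc]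
  exact mul_le_mul_of_nonneg_left hsymm (normalization_pos m hρ).le

lemma abs_le (hρ : 0 < ρ) (x : Euc (m + 1)) :
    |faceDual e ρ κ x| ≤ (ρ ^ m * coneMass m)⁻¹ := by
  have hmass := (normalization_pos m hρ).le
  rw [faceDual, abs_mul, abs_of_nonneg hmass]
  exact mul_le_of_le_one_right hmass (layerBump.abs_le_one _ _ _)

lemma abs_fst_lt_and_norm_snd_lt_of_ne_zero (hρ : 0 < ρ) {x : Euc (m + 1)}
    (hx : faceDual e ρ κ x ≠ 0) :
    |(e.symm x).fst| < layerWidth ρ κ ∧ ‖(e.symm x).snd‖ < ρ :=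
  layerBump.abs_fst_lt_and_norm_snd_lt_of_ne_zero (layerWidth.pos hρ κ) hρ
    (right_ne_zero_of_mul hx)

lemma norm_symm_lt_of_ne_zero (hρ : 0 < ρ) {x : Euc (m + 1)}
    (hx : faceDual e ρ κ x ≠ 0) :
    ‖e.symm x‖ < 2 * ρ := by
  obtain ⟨hfst, hsnd⟩ := abs_fst_lt_and_norm_snd_lt_of_ne_zero e κ hρ hx
  have hfst' : ‖(e.symm x).fst‖ < ρ := hfst.trans_le (layerWidth.le_scale hρ κ)
  refine lt_of_pow_lt_pow_left₀ 2 (by positivity) ?_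
  rw [WithLp.prod_norm_sq_eq_of_L2]
  nlinarith [norm_nonneg (e.symm x).fst, norm_nonneg (e.symm x).snd]

lemma setIntegral_fst_eq_zero (hρ : 0 < ρ) :
    ∫ x in {x | (e.symm x).fst = 0}, faceDual e ρ κ x ∂μH[(m : ℝ)] = 1 := by
  have hbump := layerBump.setIntegral_fst_eq_zero (W := Euc m) (δ := layerWidth ρ κ) hρ.le
  rw [finrank_euclideanSpace_fin, ← coneMass] at hbump
  rw [← (e.toIsometryEquiv.measurePreserving_hausdorffMeasure m).setIntegral_preimage_emb
    e.toHomeomorph.measurableEmbedding]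
  have hmass : ρ ^ m * coneMass m ≠ 0 := (mul_pos (pow_pos hρ m) (coneMass_pos m)).ne'
  simp only [faceDual, integral_const_mul, e.coe_toIsometryEquiv, e.symm_apply_apply,
    preimage_ofPred_eq]
  rw [hbump, inv_mul_cancel₀ hmass]

lemma setIntegral_fst_nonneg_mul_affine_eq_zero (hρ : 0 < ρ) (p : Euc (m + 1) →ᵃ[ℝ] ℝ) :
    ∫ x in {x | 0 ≤ (e.symm x).fst}, faceDual e ρ κ x * p x = 0 :=
  setIntegral_fst_preimage_mul_affine_eq_zero e κ
    (momentProfile.integral_Ici_div_mul_affine (layerWidth.pos hρ κ)) p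

lemma setIntegral_fst_nonpos_mul_affine_eq_zero (hρ : 0 < ρ) (p : Euc (m + 1) →ᵃ[ℝ] ℝ) :
    ∫ x in {x | (e.symm x).fst ≤ 0}, faceDual e ρ κ x * p x = 0 :=
  setIntegral_fst_preimage_mul_affine_eq_zero e κ
    (momentProfile.integral_Iic_div_mul_affine (layerWidth.pos hρ κ)) p

lemma volume_real_symm_preimage_box (hρ : 0 < ρ) {δ : ℝ} (hδ : 0 < δ) :
    volume.real {x | |(e.symm x).fst| ≤ δ ∧ ‖(e.symm x).snd‖ ≤ ρ}
      = 2 * δ * (ρ ^ m * volume.real (ball (0 : Euc m) 1)) := by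
  have hbox := volume_real_box (W := Euc m) hδ.le hρ.le
  rwa [measureReal_def, ← (measurePreserving_affineIsometryEquiv e.symm).measure_preimage_emb
    e.symm.toHomeomorph.measurableEmbedding, ← measureReal_def, finrank_euclideanSpace_fin] at hbox

lemma isClosed_symm_preimage_box (ρ δ : ℝ) :
    IsClosed {x | |(e.symm x).fst| ≤ δ ∧ ‖(e.symm x).snd‖ ≤ ρ} := by
  have hsymm : Continuous e.symm := e.symm.continuous
  have hfst : Continuous fun x ↦ |(e.symm x).fst| := (continuous_symm_fst e).abs
  have hsnd : Continuous fun x ↦ ‖(e.symm x).snd‖ := by fun_prop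
  exact (isClosed_le hfst continuous_const).inter (isClosed_le hsnd continuous_const)

lemma energySq_le (hρ : 0 < ρ) {κ : ℝ} (hκ : 0 ≤ κ) {ω : Set (Euc (m + 1))}
    (hω : MeasurableSet ω) :
    energySq κ ω (faceDual e ρ κ) ≤ faceDualEnergyConst m * (ρ ^ m)⁻¹ * max ρ⁻¹ κ := by
  set δ := layerWidth ρ κ with hδ_def
  set c := ρ ^ m * coneMass m with hc_def
  set V := volume.real (ball (0 : Euc m) 1) with hV_def
  have hδ : 0 < δ := layerWidth.pos hρ κ
  have hc : 0 < c := mul_pos (pow_pos hρ m) (coneMass_pos m)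
  let K : Set (Euc (m + 1)) := {x | |(e.symm x).fst| ≤ δ ∧ ‖(e.symm x).snd‖ ≤ ρ}
  have hK : volume.real K = 2 * δ * (ρ ^ m * V) := volume_real_symm_preimage_box e hρ hδ
  have hKfin : volume K < ∞ := by
    have := volume_real_unitBall_pos m
    refine (ENNReal.toReal_pos_iff.1 (?_ : 0 < volume.real K)).2
    rw [hK]; positivity
  have hzero : ∀ x ∉ K, faceDual e ρ κ x = 0 := fun x hx ↦ by
    contrapose! hx
    exact (abs_fst_lt_and_norm_snd_lt_of_ne_zero e κ hρ hx).imp le_of_lt le_of_lt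
  have hκδ : κ ≤ δ⁻¹ := by rw [hδ_def, layerWidth, inv_inv]; exact le_max_right _ _
  calc energySq κ ω (faceDual e ρ κ)
      ≤ ((c⁻¹ * (10 / δ)) ^ 2 + κ ^ 2 * c⁻¹ ^ 2) * volume.real K := by
        have := energySq_le_mul_volume_real (κ := κ) (lipschitzWith e κ hρ) (abs_le e κ hρ) hω
          (isClosed_symm_preimage_box e ρ δ) hKfin hzero
        rwa [Real.coe_toNNReal _ (by positivity)] at this
    _ ≤ ((c⁻¹ * (10 / δ)) ^ 2 + δ⁻¹ ^ 2 * c⁻¹ ^ 2) * volume.real K := by gcongr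
    _ = faceDualEnergyConst m * (ρ ^ m)⁻¹ * δ⁻¹ := by
        have := coneMass_pos m
        rw [hK, faceDualEnergyConst, hc_def, ← hV_def]
        field_simp
        ring
    _ = faceDualEnergyConst m * (ρ ^ m)⁻¹ * max ρ⁻¹ κ := by
        rw [hδ_def, layerWidth, inv_inv]

end faceDual

/-- `IsInterfaceChart e r T₁ T₂` says that, in the orthonormal coordinates `e`, the sets `T₁` and
`T₂` are the two closed half-balls inside the ball of radius `r` around `e 0`, and that their
intersection lies in the separating hyperplane. -/
structure IsInterfaceChart {m : ℕ} (e : WithLp 2 (ℝ × Euc m) ≃ᵃⁱ[ℝ] Euc (m + 1)) (r : ℝ)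
    (T₁ T₂ : Set (Euc (m + 1))) : Prop where
  mem_left_iff : ∀ z, ‖z‖ < r → (e z ∈ T₁ ↔ 0 ≤ z.fst)
  mem_right_iff : ∀ z, ‖z‖ < r → (e z ∈ T₂ ↔ z.fst ≤ 0)
  fst_eq_zero : ∀ z, e z ∈ T₁ ∩ T₂ → z.fst = 0

lemma setIntegral_eq_of_mem_iff {X : Type*} [MeasurableSpace X] {ν : Measure X} {f : X → ℝ}
    {S T : Set X} (hS : MeasurableSet S) (hT : MeasurableSet T)
    (h : ∀ x, f x ≠ 0 → (x ∈ S ↔ x ∈ T)) : ∫ x in S, f x ∂ν = ∫ x in T, f x ∂ν := by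
  rw [← integral_indicator hS, ← integral_indicator hT]
  congr with x
  by_cases hx : f x = 0
  · simp [indicator, hx]
  · simp [indicator, h x hx]

lemma hausdorffMeasure_le_of_fst_eq_zero {m : ℕ} (e : WithLp 2 (ℝ × Euc m) ≃ᵃⁱ[ℝ] Euc (m + 1))
    {F : Set (Euc (m + 1))} {h : ℝ} (hh : 0 ≤ h) (hfst : ∀ x ∈ F, (e.symm x).fst = 0)
    (hF : F ⊆ closedBall (e 0) h) :
    μH[(m : ℝ)] F ≤ ENNReal.ofReal (h ^ m) * μH[(m : ℝ)] (ball (0 : Euc m) 1) := by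
  let ι : Euc m → Euc (m + 1) := fun w ↦ e (WithLp.toLp 2 (0, w))
  have hι : Isometry ι := Isometry.of_dist_eq fun v w ↦ by simp [ι]
  have hsub : F ⊆ ι '' closedBall 0 h := fun x hx ↦ by
    have hx₀ : WithLp.toLp 2 (0, (e.symm x).snd) = e.symm x :=
      congrArg (WithLp.toLp 2) (Prod.ext (hfst x hx).symm rfl)
    refine ⟨(e.symm x).snd, ?_, by simp [ι, hx₀]⟩
    rw [mem_closedBall_zero_iff]
    calc ‖(e.symm x).snd‖ ≤ ‖e.symm x‖ := WithLp.norm_snd_le _ _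
      _ = dist x (e 0) := norm_symm_apply_eq_dist e x
      _ ≤ h := hF hx
  calc μH[(m : ℝ)] F ≤ μH[(m : ℝ)] (ι '' closedBall 0 h) := measure_mono hsub
    _ = μH[(m : ℝ)] (closedBall (0 : Euc m) h) :=
        hι.hausdorffMeasure_image (.inl (Nat.cast_nonneg m)) _
    _ = ENNReal.ofReal (h ^ m) * μH[(m : ℝ)] (ball (0 : Euc m) 1) := by
        rw [Measure.addHaar_closedBall _ _ hh, finrank_euclideanSpace_fin]

namespace IsInterfaceChart

variable {m : ℕ} {e : WithLp 2 (ℝ × Euc m) ≃ᵃⁱ[ℝ] Euc (m + 1)} {T₁ T₂ : Set (Euc (m + 1))}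
  {r ρ κ : ℝ}

lemma ball_subset_interior (hchart : IsInterfaceChart e r T₁ T₂) :
    ball (e 0) r ⊆ interior (T₁ ∪ T₂) := by
  refine interior_maximal (fun x hx ↦ ?_) isOpen_ball
  have hz : ‖e.symm x‖ < r := (norm_symm_apply_eq_dist e x).trans_lt hx
  have hleft := hchart.mem_left_iff _ hz
  have hright := hchart.mem_right_iff _ hz
  rw [e.apply_symm_apply] at hleft hright
  exact (le_total 0 (e.symm x).fst).imp hleft.2 hright.2

lemma mem_iff_of_faceDual_ne_zero (hchart : IsInterfaceChart e (2 * ρ) T₁ T₂) (hρ : 0 < ρ)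
    {x : Euc (m + 1)} (hx : faceDual e ρ κ x ≠ 0) :
    (x ∈ T₁ ↔ 0 ≤ (e.symm x).fst) ∧ (x ∈ T₂ ↔ (e.symm x).fst ≤ 0) := by
  have hz := faceDual.norm_symm_lt_of_ne_zero e κ hρ hx
  simpa using And.intro (hchart.mem_left_iff _ hz) (hchart.mem_right_iff _ hz)

lemma faceDual_eq_zero_of_notMem (hchart : IsInterfaceChart e (2 * ρ) T₁ T₂) (hρ : 0 < ρ)
    {x : Euc (m + 1)} (hx : x ∉ interior (T₁ ∪ T₂)) : faceDual e ρ κ x = 0 := by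
  contrapose! hx
  exact hchart.ball_subset_interior ((norm_symm_apply_eq_dist e x).symm.trans_lt
    (faceDual.norm_symm_lt_of_ne_zero e κ hρ hx))

lemma setIntegral_inter_faceDual (hchart : IsInterfaceChart e (2 * ρ) T₁ T₂) (hρ : 0 < ρ)
    (hT₁ : MeasurableSet T₁) (hT₂ : MeasurableSet T₂) :
    ∫ x in T₁ ∩ T₂, faceDual e ρ κ x ∂μH[(m : ℝ)] = 1 := by
  have hhyperplane : MeasurableSet {x | (e.symm x).fst = 0} :=
    (isClosed_eq (continuous_symm_fst e) continuous_const).measurableSet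
  rw [← faceDual.setIntegral_fst_eq_zero e κ hρ]
  refine setIntegral_eq_of_mem_iff (hT₁.inter hT₂) hhyperplane fun x hx ↦ ?_
  obtain ⟨hleft, hright⟩ := hchart.mem_iff_of_faceDual_ne_zero hρ hx
  rw [mem_inter_iff, hleft, hright, and_comm, ← le_antisymm_iff, mem_ofPred_eq]

lemma setIntegral_left_faceDual_mul_affine (hchart : IsInterfaceChart e (2 * ρ) T₁ T₂)
    (hρ : 0 < ρ) (hT₁ : MeasurableSet T₁) (p : Euc (m + 1) →ᵃ[ℝ] ℝ) :
    ∫ x in T₁, faceDual e ρ κ x * p x = 0 := by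
  have hhalf : MeasurableSet {x | 0 ≤ (e.symm x).fst} :=
    (isClosed_le continuous_const (continuous_symm_fst e)).measurableSet
  rw [← faceDual.setIntegral_fst_nonneg_mul_affine_eq_zero e κ hρ p]
  exact setIntegral_eq_of_mem_iff hT₁ hhalf fun x hx ↦
    (hchart.mem_iff_of_faceDual_ne_zero hρ (left_ne_zero_of_mul hx)).1

lemma setIntegral_right_faceDual_mul_affine (hchart : IsInterfaceChart e (2 * ρ) T₁ T₂)
    (hρ : 0 < ρ) (hT₂ : MeasurableSet T₂) (p : Euc (m + 1) →ᵃ[ℝ] ℝ) :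
    ∫ x in T₂, faceDual e ρ κ x * p x = 0 := by
  have hhalf : MeasurableSet {x | (e.symm x).fst ≤ 0} :=
    (isClosed_le (continuous_symm_fst e) continuous_const).measurableSet
  rw [← faceDual.setIntegral_fst_nonpos_mul_affine_eq_zero e κ hρ p]
  exact setIntegral_eq_of_mem_iff hT₂ hhalf fun x hx ↦
    (hchart.mem_iff_of_faceDual_ne_zero hρ (left_ne_zero_of_mul hx)).2

lemma toReal_hausdorffMeasure_inter_le (hchart : IsInterfaceChart e r T₁ T₂) {h : ℝ} (hh : 0 ≤ h)
    (hF : T₁ ∩ T₂ ⊆ closedBall (e 0) h) :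
    (μH[(m : ℝ)] (T₁ ∩ T₂)).toReal ≤ h ^ m * (μH[(m : ℝ)] (ball (0 : Euc m) 1)).toReal := by
  have hle := hausdorffMeasure_le_of_fst_eq_zero e hh
    (fun x hx ↦ hchart.fst_eq_zero _ (by rwa [e.apply_symm_apply])) hF
  have hfin : ENNReal.ofReal (h ^ m) * μH[(m : ℝ)] (ball (0 : Euc m) 1) ≠ ∞ :=
    ENNReal.mul_ne_top ENNReal.ofReal_ne_top measure_ball_lt_top.ne
  simpa [ENNReal.toReal_mul, hh] using ENNReal.toReal_mono hfin hle

lemma toReal_hausdorffMeasure_inter_pos (hchart : IsInterfaceChart e (2 * ρ) T₁ T₂) (hρ : 0 < ρ)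
    (hT₁ : MeasurableSet T₁) (hT₂ : MeasurableSet T₂) {h : ℝ} (hh : 0 ≤ h)
    (hF : T₁ ∩ T₂ ⊆ closedBall (e 0) h) : 0 < (μH[(m : ℝ)] (T₁ ∩ T₂)).toReal := by
  have hle := hausdorffMeasure_le_of_fst_eq_zero e hh
    (fun x hx ↦ hchart.fst_eq_zero _ (by rwa [e.apply_symm_apply])) hF
  refine ENNReal.toReal_pos (fun hnull ↦ ?_) (hle.trans_lt (ENNReal.mul_lt_top
    ENNReal.ofReal_lt_top measure_ball_lt_top)).ne
  have hunit := hchart.setIntegral_inter_faceDual (κ := 0) hρ hT₁ hT₂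
  simp [Measure.restrict_eq_zero.2 hnull] at hunit

lemma sqrt_energySq_faceDual_le (hchart : IsInterfaceChart e (2 * ρ) T₁ T₂) (hρ : 0 < ρ)
    (hκ : 0 ≤ κ) (hT₁ : MeasurableSet T₁) (hT₂ : MeasurableSet T₂) {h K : ℝ} (hh : 0 < h)
    (hF : T₁ ∩ T₂ ⊆ closedBall (e 0) h) (hK : 1 ≤ K) (hhK : h ≤ K * ρ) :
    √(energySq κ (interior (T₁ ∪ T₂)) (faceDual e ρ κ))
      ≤ √(faceDualEnergyConst m * K ^ (m + 1) * (μH[(m : ℝ)] (ball (0 : Euc m) 1)).toReal)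
        * (μH[(m : ℝ)] (T₁ ∩ T₂)).toReal ^ (-(1 / 2 : ℝ)) * √(max h⁻¹ κ) := by
  set V := (μH[(m : ℝ)] (ball (0 : Euc m) 1)).toReal
  set A := (μH[(m : ℝ)] (T₁ ∩ T₂)).toReal
  have hC := faceDualEnergyConst_pos m
  have hA : 0 < A := hchart.toReal_hausdorffMeasure_inter_pos hρ hT₁ hT₂ hh.le hF
  have harea : (ρ ^ m)⁻¹ ≤ K ^ m * V * A⁻¹ := by
    rw [← div_eq_mul_inv, le_div_iff₀ hA, inv_mul_le_iff₀ (pow_pos hρ m)]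
    calc A ≤ h ^ m * V := hchart.toReal_hausdorffMeasure_inter_le hh.le hF
      _ ≤ (K * ρ) ^ m * V := by gcongr
      _ = ρ ^ m * (K ^ m * V) := by rw [mul_pow]; ring
  have hscale : max ρ⁻¹ κ ≤ K * max h⁻¹ κ := by
    rw [mul_max_of_nonneg _ _ (by positivity)]
    refine max_le_max ?_ (le_mul_of_one_le_left hκ hK)
    rwa [← div_eq_mul_inv, inv_le_comm₀ hρ (by positivity), inv_div, div_le_iff₀' (by positivity)]
  have henergy : energySq κ (interior (T₁ ∪ T₂)) (faceDual e ρ κ)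
      ≤ faceDualEnergyConst m * K ^ (m + 1) * V * A⁻¹ * max h⁻¹ κ :=
    calc _ ≤ faceDualEnergyConst m * (ρ ^ m)⁻¹ * max ρ⁻¹ κ :=
          faceDual.energySq_le e hρ hκ isOpen_interior.measurableSet
      _ ≤ faceDualEnergyConst m * (K ^ m * V * A⁻¹) * (K * max h⁻¹ κ) := by gcongr
      _ = _ := by ring
  have hroot : A ^ (-(1 / 2 : ℝ)) = √(A⁻¹) := by
    rw [Real.rpow_neg hA.le, ← Real.sqrt_eq_rpow, Real.sqrt_inv]
  rw [hroot, ← Real.sqrt_mul (by positivity), ← Real.sqrt_mul (by positivity)]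
  exact Real.sqrt_le_sqrt henergy

end IsInterfaceChart

section AffineFunctionals

lemma exists_linearIsometryEquiv_apply_eq {E F : Type*} [NormedAddCommGroup E]
    [InnerProductSpace ℝ E] [FiniteDimensional ℝ E] [NormedAddCommGroup F] [InnerProductSpace ℝ F]
    [FiniteDimensional ℝ F] (hdim : Module.finrank ℝ E = Module.finrank ℝ F) {u : E} {v : F}
    (huv : ‖u‖ = ‖v‖) : ∃ L : E ≃ₗᵢ[ℝ] F, L u = v := by
  let L₀ : E ≃ₗᵢ[ℝ] F := 
    (stdOrthonormalBasis ℝ E).equiv (stdOrthonormalBasis ℝ F) (finCongr hdim)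
  refine ⟨L₀.trans (ℝ ∙ (L₀ u - v))ᗮ.reflection, ?_⟩
  exact Submodule.reflection_sub ((L₀.norm_map u).trans huv)

lemma exists_affineIsometryEquiv_apply_eq_mul_fst {E W : Type*} [NormedAddCommGroup E]
    [InnerProductSpace ℝ E] [FiniteDimensional ℝ E] [NormedAddCommGroup W] [InnerProductSpace ℝ W]
    [FiniteDimensional ℝ W] (hdim : Module.finrank ℝ E = Module.finrank ℝ W + 1) (f : E →ᵃ[ℝ] ℝ)
    {c x : E} (hc : f c = 0) (hx : f x ≠ 0) :
    ∃ e : WithLp 2 (ℝ × W) ≃ᵃⁱ[ℝ] E, e 0 = c ∧ ∃ a > 0, ∀ z, f (e z) = a * z.fst := by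
  obtain ⟨g, hg⟩ : ∃ g : E, ∀ v, f.linear v = ⟪g, v⟫ :=
    ⟨(InnerProductSpace.toDual ℝ E).symm (LinearMap.toContinuousLinearMap f.linear),
      fun v ↦ by simp⟩
  have hf (v : E) : f (v + c) = ⟪g, v⟫ := by
    rw [← vadd_eq_add, f.map_vadd, hc, hg, vadd_eq_add, add_zero]
  have hg₀ : 0 < ‖g‖ := norm_pos_iff.2 fun h ↦ hx <| by
    rw [← sub_add_cancel x c, hf, h, inner_zero_left]
  have hrank : Module.finrank ℝ (WithLp 2 (ℝ × W)) = Module.finrank ℝ E := by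
    rw [(WithLp.linearEquiv 2 ℝ (ℝ × W)).finrank_eq, Module.finrank_prod, Module.finrank_self, hdim,
      add_comm]
  obtain ⟨L, hL⟩ := exists_linearIsometryEquiv_apply_eq hrank
    (u := WithLp.toLp 2 (‖g‖, (0 : W))) (v := g) (by simp)
  refine ⟨L.toAffineIsometryEquiv.trans (AffineIsometryEquiv.vaddConst ℝ c), by simp, ‖g‖, hg₀,
    fun z ↦ ?_⟩
  calc f (L z + c) = ⟪L (WithLp.toLp 2 (‖g‖, 0)), L z⟫ := by rw [hf, hL]
    _ = ‖g‖ * z.fst := by rw [L.inner_map_map, WithLp.prod_inner_apply]; simp [mul_comm]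

lemma mul_abs_sub_le_of_mapsTo_ball {E : Type*} [NormedAddCommGroup E] [NormedSpace ℝ E]
    (f : E →ᵃ[ℝ] ℝ) {c : E} {r : ℝ} (hf : MapsTo f (ball c r) (Icc 0 1)) (x y : E) :
    r * |f x - f y| ≤ 2 * dist x y := by
  rcases le_or_gt r 0 with hr | hr
  · exact (mul_nonpos_of_nonpos_of_nonneg hr (abs_nonneg _)).trans (by positivity)
  have hbound : ∀ v ∈ closedBall (0 : E) (r / 2), ‖f.linear v‖ ≤ 1 := fun v hv ↦ by
    have hcenter := hf (mem_ball_self hr)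
    have hshift : f (v +ᵥ c) ∈ Icc (0 : ℝ) 1 := hf <| by
      rw [mem_ball, dist_eq_norm, vadd_eq_add, add_sub_cancel_right]
      linarith [mem_closedBall_zero_iff.1 hv]
    rw [f.map_vadd, vadd_eq_add] at hshift
    rw [Real.norm_eq_abs, abs_le]
    constructor <;> linarith [hcenter.1, hcenter.2, hshift.1, hshift.2]
  have hlinear := LinearMap.bound_of_ball_bound' (half_pos hr) 1 f.linear hbound (x - y)
  rw [← vsub_eq_sub, f.linearMap_vsub, vsub_eq_sub, Real.norm_eq_abs, vsub_eq_sub,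
    ← dist_eq_norm] at hlinear
  calc r * |f x - f y| ≤ r * (1 / (r / 2) * dist x y) := by gcongr
    _ = 2 * dist x y := by field_simp

lemma map_centroid_eq {ι E : Type*} [AddCommGroup E] [Module ℝ E] (f : E →ᵃ[ℝ] ℝ)
    {s : Finset ι} (hs : s.Nonempty) (p : ι → E) :
    f (s.centroid ℝ p) = (s.card : ℝ)⁻¹ * ∑ i ∈ s, f (p i) := by
  have hsum := s.sum_centroidWeights_eq_one_of_nonempty ℝ hs
  rw [Finset.centroid_def, Finset.map_affineCombination _ _ _ hsum,
    Finset.affineCombination_eq_linear_combination _ _ _ hsum, Finset.mul_sum]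
  rfl

lemma div_card_le_map_centroid {ι E : Type*} [AddCommGroup E] [Module ℝ E] (f : E →ᵃ[ℝ] ℝ)
    {s : Finset ι} {p : ι → E} (hf : ∀ i ∈ s, 0 ≤ f (p i)) {x : E}
    (hx : x ∈ convexHull ℝ (p '' s)) :
    f x / s.card ≤ f (s.centroid ℝ p) := by
  obtain ⟨_, ⟨i, hi, rfl⟩, hxi⟩ :=
    ((convexOn_id convex_univ).comp_affineMap f).exists_ge_of_mem_convexHull (subset_univ _) hx
  rw [map_centroid_eq f ⟨i, hi⟩, div_eq_inv_mul]
  gcongr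
  exact hxi.trans (Finset.single_le_sum hf hi)

lemma apply_eq_mul_coord_of_forall_ne {ι E : Type*} [Finite ι] [AddCommGroup E] [Module ℝ E]
    (B : AffineBasis ι ℝ E) (f : E →ᵃ[ℝ] ℝ) {z : ι} (hf : ∀ i ≠ z, f (B i) = 0) (x : E) :
    f x = f (B z) * B.coord z x := by
  cases nonempty_fintype ι
  have hsum : ∑ i, B.coord i x = 1 := B.sum_coord_apply_eq_one x
  conv_lhs => rw [← B.affineCombination_coord_eq_self x]
  rw [Finset.map_affineCombination _ _ _ hsum,
    Finset.affineCombination_eq_linear_combination _ _ _ hsum,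
    Finset.sum_eq_single z (fun i _ hi ↦ by simp [hf i hi]) (by simp)]
  exact mul_comm _ _

end AffineFunctionals

section SimplexGeometry

variable {d : ℕ} (B : AffineBasis (Fin (d + 1)) ℝ (Euc d)) (z : Fin (d + 1))

lemma mem_simT_iff {x : Euc d} : x ∈ simT B ↔ ∀ i, 0 ≤ B.coord i x := by
  rw [simT, B.convexHull_eq_nonneg_coord, mem_ofPred_eq]

lemma coord_mem_Icc_of_mem_simT {x : Euc d} (hx : x ∈ simT B) (i : Fin (d + 1)) :
    B.coord i x ∈ Icc (0 : ℝ) 1 := by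
  have hnonneg := (mem_simT_iff B).1 hx
  refine ⟨hnonneg i, ?_⟩
  rw [← B.sum_coord_apply_eq_one x]
  exact Finset.single_le_sum (fun j _ ↦ hnonneg j) (Finset.mem_univ i)

lemma isCompact_simT : IsCompact (simT B) := (finite_range B).isCompact_convexHull ℝ

lemma simFace_subset_simT : simFace B z ⊆ simT B := convexHull_mono (image_subset_range _ _)

lemma apply_mem_simFace {i : Fin (d + 1)} (hi : i ≠ z) : B i ∈ simFace B z :=
  subset_convexHull ℝ _ ⟨i, hi, rfl⟩

lemma coord_eq_zero_of_mem_simFace {x : Euc d} (hx : x ∈ simFace B z) : B.coord z x = 0 := by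
  have hconvex : Convex ℝ (B.coord z ⁻¹' {0}) := (convex_singleton 0).affine_preimage _
  refine convexHull_min ?_ hconvex hx
  rintro _ ⟨i, hi, rfl⟩
  exact B.coord_apply_ne (Ne.symm hi)

lemma exists_ne_and_ne_and_ne (hd : 2 ≤ d) : ∃ i j : Fin (d + 1), i ≠ z ∧ j ≠ z ∧ i ≠ j := by
  have hcard : 1 < (Finset.univ.erase z).card := by
    rwa [Finset.card_erase_of_mem (Finset.mem_univ z), Finset.card_fin, Nat.add_sub_cancel]
  obtain ⟨i, hi, j, hj, hij⟩ := Finset.one_lt_card.1 hcard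
  exact ⟨i, j, Finset.ne_of_mem_erase hi, Finset.ne_of_mem_erase hj, hij⟩

lemma isBounded_simFace : Bornology.IsBounded (simFace B z) :=
  (isCompact_simT B).isBounded.subset (simFace_subset_simT B z)

lemma diam_simFace_pos (hd : 2 ≤ d) : 0 < diam (simFace B z) := by
  obtain ⟨i, j, hi, hj, hij⟩ := exists_ne_and_ne_and_ne z hd
  exact (dist_pos.2 (B.ind.injective.ne hij)).trans_le (dist_le_diam_of_mem (isBounded_simFace B z)
    (apply_mem_simFace B z hi) (apply_mem_simFace B z hj))

lemma diam_simFace_le : diam (simFace B z) ≤ diam (simT B) :=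
  diam_mono (simFace_subset_simT B z) (isCompact_simT B).isBounded

lemma inradius_nonneg (s : Set (Euc d)) : 0 ≤ inradius s :=
  Real.sSup_nonneg' ⟨0, ⟨0, by simp⟩, le_rfl⟩

lemma inradius_mul_abs_coord_sub_le (i : Fin (d + 1)) (x y : Euc d) :
    inradius (simT B) * |B.coord i x - B.coord i y| ≤ 2 * dist x y := by
  rcases (abs_nonneg (B.coord i x - B.coord i y)).eq_or_lt' with hzero | hpos
  · rw [hzero, mul_zero]
    positivity
  rw [← le_div_iff₀ hpos]
  refine Real.sSup_le ?_ (by positivity)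
  rintro r ⟨c, hball⟩
  rw [le_div_iff₀ hpos]
  exact mul_abs_sub_le_of_mapsTo_ball _
    (fun _ hw ↦ coord_mem_Icc_of_mem_simT B (hball hw) i) x y

lemma inradius_simT_le_two_mul_diam_simFace (hd : 2 ≤ d) :
    inradius (simT B) ≤ 2 * diam (simFace B z) := by
  obtain ⟨i, j, hi, hj, hij⟩ := exists_ne_and_ne_and_ne z hd
  have hle := inradius_mul_abs_coord_sub_le B i (B i) (B j)
  rw [B.coord_apply_eq, B.coord_apply_ne hij, sub_zero, abs_one, mul_one] at hle
  refine hle.trans (mul_le_mul_of_nonneg_left ?_ zero_le_two)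
  exact dist_le_diam_of_mem (isBounded_simFace B z) (apply_mem_simFace B z hi)
    (apply_mem_simFace B z hj)

lemma pos_and_inradius_pos_of_diam_le (hd : 2 ≤ d) {μ : ℝ}
    (hμ : diam (simT B) ≤ μ * inradius (simT B)) : 0 < μ ∧ 0 < inradius (simT B) := by
  have hprod := ((diam_simFace_pos B 0 hd).trans_le (diam_simFace_le B 0)).trans_le hμ
  have hr := (inradius_nonneg (simT B)).lt_of_ne fun h ↦ by simp [← h] at hprod
  exact ⟨pos_of_mul_pos_left hprod hr.le, hr⟩

/-- The barycenter of the face of `simT B` opposite to the vertex `z`. -/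
def faceCentroid : Euc d := (Finset.univ.erase z).centroid ℝ B

lemma simFace_eq_convexHull_image_erase :
    simFace B z = convexHull ℝ (B '' (Finset.univ.erase z : Finset (Fin (d + 1)))) := by
  rw [simFace, Finset.coe_erase, Finset.coe_univ, ← compl_eq_univ_sdiff, compl_singleton_eq]

lemma faceCentroid_mem_simFace (hd : 0 < d) : faceCentroid B z ∈ simFace B z := by
  have hs : (Finset.univ.erase z).Nonempty := Finset.card_pos.1 (by simpa using hd)
  have hsum := Finset.sum_centroidWeights_eq_one_of_nonempty ℝ _ hs
  rw [faceCentroid, simFace_eq_convexHull_image_erase, Finset.centroid_def,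
    affineCombination_eq_centerMass hsum]
  refine Finset.centerMass_mem_convexHull _ (fun i _ ↦ ?_) (hsum ▸ one_pos)
    fun i hi ↦ mem_image_of_mem _ hi
  rw [Finset.centroidWeights_apply]
  positivity

variable {B z} {B' : AffineBasis (Fin (d + 1)) ℝ (Euc d)} {z' : Fin (d + 1)}

lemma inv_le_coord_faceCentroid (hF : simFace B z = simFace B' z') {i : Fin (d + 1)}
    (hi : i ≠ z') : (d : ℝ)⁻¹ ≤ B'.coord i (faceCentroid B z) := by
  have hvertex : B' i ∈ convexHull ℝ (B '' (Finset.univ.erase z : Finset (Fin (d + 1)))) := by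
    rw [← simFace_eq_convexHull_image_erase, hF]
    exact apply_mem_simFace B' z' hi
  have hnonneg : ∀ j ∈ Finset.univ.erase z, 0 ≤ B'.coord i (B j) := fun j hj ↦ by
    have hmem := apply_mem_simFace B z (Finset.ne_of_mem_erase hj)
    rw [hF] at hmem
    exact (mem_simT_iff B').1 (simFace_subset_simT B' z' hmem) i
  simpa [faceCentroid] using div_card_le_map_centroid (B'.coord i) hnonneg hvertex

lemma mem_simT_iff_of_dist_faceCentroid_lt (hd : 0 < d) (hF : simFace B z = simFace B' z') {R : ℝ}
    (hR : 2 * d * R ≤ inradius (simT B')) {x : Euc d} (hx : dist x (faceCentroid B z) < R) :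
    x ∈ simT B' ↔ 0 ≤ B'.coord z' x := by
  refine ⟨fun h ↦ (mem_simT_iff B').1 h z', fun hz ↦ (mem_simT_iff B').2 fun i ↦ ?_⟩
  rcases eq_or_ne i z' with rfl | hi
  · exact hz
  have hR₀ : 0 < R := dist_nonneg.trans_lt hx
  have hclose : |B'.coord i x - B'.coord i (faceCentroid B z)| ≤ (d : ℝ)⁻¹ := by
    refine le_of_mul_le_mul_left (?_ : 2 * d * R * _ ≤ 2 * d * R * _) (by positivity)
    calc 2 * d * R * |B'.coord i x - B'.coord i (faceCentroid B z)|
        ≤ inradius (simT B') * |B'.coord i x - B'.coord i (faceCentroid B z)| := by gcongr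
      _ ≤ 2 * dist x (faceCentroid B z) := inradius_mul_abs_coord_sub_le B' i _ _
      _ ≤ 2 * R := by gcongr
      _ = 2 * d * R * (d : ℝ)⁻¹ := by field_simp
  linarith [inv_le_coord_faceCentroid hF hi, (abs_le.1 hclose).1]

lemma coord_eq_mul_coord_of_simFace_eq (hF : simFace B z = simFace B' z') (x : Euc d) :
    B'.coord z' x = B'.coord z' (B z) * B.coord z x :=
  apply_eq_mul_coord_of_forall_ne B (B'.coord z')
    (fun _ hi ↦ coord_eq_zero_of_mem_simFace B' z' (hF ▸ apply_mem_simFace B z hi)) x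

lemma diam_le_mul_inradius_of_simFace_eq (hd : 2 ≤ d) (hF : simFace B z = simFace B' z') {μ : ℝ}
    (hμ : diam (simT B) ≤ μ * inradius (simT B)) (hμ' : diam (simT B') ≤ μ * inradius (simT B')) :
    diam (simT B) ≤ 2 * μ ^ 2 * inradius (simT B') := by
  have hμ₀ := (pos_and_inradius_pos_of_diam_le B hd hμ).1
  calc diam (simT B) ≤ μ * inradius (simT B) := hμ
    _ ≤ μ * (2 * diam (simFace B' z')) := by
        gcongr
        exact hF ▸ inradius_simT_le_two_mul_diam_simFace B z hd
    _ ≤ μ * (2 * (μ * inradius (simT B'))) := by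
        gcongr
        exact (diam_simFace_le B' z').trans hμ'
    _ = 2 * μ ^ 2 * inradius (simT B') := by ring

lemma max_diam_le_mul_min_inradius (hd : 2 ≤ d) (hF : simFace B z = simFace B' z') {μ : ℝ}
    (hμ : diam (simT B) ≤ μ * inradius (simT B)) (hμ' : diam (simT B') ≤ μ * inradius (simT B')) :
    max (diam (simT B)) (diam (simT B'))
      ≤ (μ + 2 * μ ^ 2) * min (inradius (simT B)) (inradius (simT B')) := by
  obtain ⟨hμ₀, hr⟩ := pos_and_inradius_pos_of_diam_le B hd hμ
  have hr' := (pos_and_inradius_pos_of_diam_le B' hd hμ').2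
  have hcross := diam_le_mul_inradius_of_simFace_eq hd hF hμ hμ'
  have hcross' := diam_le_mul_inradius_of_simFace_eq hd hF.symm hμ' hμ
  rw [mul_min_of_nonneg _ _ (by positivity)]
  refine max_le (le_min ?_ ?_) (le_min ?_ ?_) <;> rw [add_mul]
  · exact hμ.trans (le_add_of_nonneg_right (by positivity))
  · exact hcross.trans (le_add_of_nonneg_left (by positivity))
  · exact hcross'.trans (le_add_of_nonneg_left (by positivity))
  · exact hμ'.trans (le_add_of_nonneg_right (by positivity))

end SimplexGeometry

section Interface

variable {m : ℕ} {B₁ B₂ : AffineBasis (Fin (m + 1 + 1)) ℝ (Euc (m + 1))} {z₁ z₂ : Fin (m + 1 + 1)}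

lemma exists_isInterfaceChart (hF₁ : simT B₁ ∩ simT B₂ = simFace B₁ z₁)
    (hF₂ : simT B₁ ∩ simT B₂ = simFace B₂ z₂) {R : ℝ} (hR : 0 < R)
    (hR₁ : 2 * (m + 1 : ℕ) * R ≤ inradius (simT B₁))
    (hR₂ : 2 * (m + 1 : ℕ) * R ≤ inradius (simT B₂)) :
    ∃ e : WithLp 2 (ℝ × Euc m) ≃ᵃⁱ[ℝ] Euc (m + 1),
      e 0 = faceCentroid B₁ z₁ ∧ IsInterfaceChart e R (simT B₁) (simT B₂) := by
  have hm : 0 < m + 1 := m.succ_pos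
  have hF : simFace B₁ z₁ = simFace B₂ z₂ := hF₁.symm.trans hF₂
  obtain ⟨e, he, a, ha, hcoord⟩ := exists_affineIsometryEquiv_apply_eq_mul_fst (W := Euc m)
    (x := B₁ z₁) (by simp) (B₁.coord z₁)
    (coord_eq_zero_of_mem_simFace B₁ z₁ (faceCentroid_mem_simFace B₁ z₁ hm)) (by simp)
  have hdist {w : WithLp 2 (ℝ × Euc m)} (hw : ‖w‖ < R) : dist (e w) (faceCentroid B₁ z₁) < R := by
    rwa [← he, e.dist_map, dist_zero_right]
  have hleft (w) (hw : ‖w‖ < R) : e w ∈ simT B₁ ↔ 0 ≤ w.fst := by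
    rw [mem_simT_iff_of_dist_faceCentroid_lt hm rfl hR₁ (hdist hw), hcoord,
      mul_nonneg_iff_of_pos_left ha]
  set b := B₂.coord z₂ (B₁ z₁)
  have hright (w) (hw : ‖w‖ < R) : e w ∈ simT B₂ ↔ 0 ≤ b * w.fst := by
    rw [mem_simT_iff_of_dist_faceCentroid_lt hm hF hR₂ (hdist hw),
      coord_eq_mul_coord_of_simFace_eq hF, hcoord, mul_left_comm, mul_nonneg_iff_of_pos_left ha]
  have hzero (w) (hw : e w ∈ simT B₁ ∩ simT B₂) : w.fst = 0 := by
    have h := coord_eq_zero_of_mem_simFace B₁ z₁ (hF₁ ▸ hw)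
    rw [hcoord] at h
    exact (mul_eq_zero.1 h).resolve_left ha.ne'
  -- If both simplices lay on the same side of the face, they would overlap off the hyperplane.
  have hb : b < 0 := by
    by_contra! hb
    let w : WithLp 2 (ℝ × Euc m) := WithLp.toLp 2 (R / 2, 0)
    have hw : ‖w‖ < R := by simpa [w, abs_of_pos hR] using hR
    have hfst : w.fst = 0 := hzero w
      ⟨(hleft w hw).2 (half_pos hR).le, (hright w hw).2 (mul_nonneg hb (half_pos hR).le)⟩
    exact (half_pos hR).ne' hfst
  refine ⟨e, he, hleft, fun w hw ↦ (hright w hw).trans ?_, hzero⟩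
  rw [← neg_mul_neg, mul_nonneg_iff_of_pos_left (neg_pos.2 hb), neg_nonneg]

lemma exists_isInterfaceChart_of_diam_le_mul_inradius (hm : 1 ≤ m) {μ : ℝ}
    (hμ₁ : diam (simT B₁) ≤ μ * inradius (simT B₁))
    (hμ₂ : diam (simT B₂) ≤ μ * inradius (simT B₂))
    (hF₁ : simT B₁ ∩ simT B₂ = simFace B₁ z₁) (hF₂ : simT B₁ ∩ simT B₂ = simFace B₂ z₂) :
    ∃ e : WithLp 2 (ℝ × Euc m) ≃ᵃⁱ[ℝ] Euc (m + 1), ∃ ρ > 0,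
      IsInterfaceChart e (2 * ρ) (simT B₁) (simT B₂) ∧
      simT B₁ ∩ simT B₂ ⊆ closedBall (e 0) (max (diam (simT B₁)) (diam (simT B₂))) ∧
      max (diam (simT B₁)) (diam (simT B₂)) ≤ 4 * (m + 1 : ℕ) * (μ + 2 * μ ^ 2) * ρ := by
  have hd : 2 ≤ m + 1 := by lia
  have hr₁ := (pos_and_inradius_pos_of_diam_le B₁ hd hμ₁).2
  have hr₂ := (pos_and_inradius_pos_of_diam_le B₂ hd hμ₂).2
  set r := min (inradius (simT B₁)) (inradius (simT B₂))
  set ρ := r / (4 * (m + 1 : ℕ)) with hρ_def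
  have hρ : 0 < ρ := div_pos (lt_min hr₁ hr₂) (by positivity)
  have hrρ : 2 * (m + 1 : ℕ) * (2 * ρ) = r := by rw [hρ_def]; field_simp; ring
  obtain ⟨e, he, hchart⟩ := exists_isInterfaceChart hF₁ hF₂ (mul_pos two_pos hρ)
    (hrρ.trans_le (min_le_left _ _)) (hrρ.trans_le (min_le_right _ _))
  refine ⟨e, ρ, hρ, hchart, fun x hx ↦ ?_, ?_⟩
  · have hc := simFace_subset_simT B₁ z₁ (faceCentroid_mem_simFace B₁ z₁ m.succ_pos)
    rw [he, mem_closedBall]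
    exact (dist_le_diam_of_mem (isCompact_simT B₁).isBounded hx.1 hc).trans (le_max_left _ _)
  · calc _ ≤ (μ + 2 * μ ^ 2) * r := max_diam_le_mul_min_inradius hd (hF₁.symm.trans hF₂) hμ₁ hμ₂
      _ = 4 * (m + 1 : ℕ) * (μ + 2 * μ ^ 2) * ρ := by rw [← hrρ]; ring

end Interface

/-- the face dual function: duality with the face Dirac distribution,
orthogonality to elementwise affine functions, and robust energy bound. For two
simplices `T₁, T₂` with disjoint interiors sharing the common face `F = T₁ ∩ T₂`, each
with shape parameter `≤ μ`, there is a Lipschitz function `φ*_F` vanishing outside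
`ω_F = int (T₁ ∪ T₂)` with `∫_F φ*_F dH^{d−1} = 1`, `∫_{Tᵢ} φ*_F p = 0` for every affine
`p`, and `‖φ*_F‖_{E,ω_F} ≤ C |F|^{-1/2} max{h⁻¹, κ}^{1/2}` with `C = C(d, μ)`
independent of `κ`. -/
theorem face_dual_function_exists (d : ℕ) (hd : 2 ≤ d) (μ : ℝ) :
    ∃ C : ℝ, 0 < C ∧ ∀ κ : ℝ, 0 < κ →
      ∀ B₁ B₂ : AffineBasis (Fin (d + 1)) ℝ (Euc d),
        interior (simT B₁) ∩ interior (simT B₂) = ∅ →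
        Metric.diam (simT B₁) ≤ μ * inradius (simT B₁) →
        Metric.diam (simT B₂) ≤ μ * inradius (simT B₂) →
        ∀ z₁ z₂ : Fin (d + 1),
          simT B₁ ∩ simT B₂ = simFace B₁ z₁ →
          simT B₁ ∩ simT B₂ = simFace B₂ z₂ →
          ∃ φs : Euc d → ℝ,
            (∃ L : ℝ≥0, LipschitzWith L φs) ∧
            (∀ x ∉ interior (simT B₁ ∪ simT B₂), φs x = 0) ∧
            (∫ x in simT B₁ ∩ simT B₂, φs x ∂(μH[(d : ℝ) - 1])) = 1 ∧
            (∀ p : Euc d →ᵃ[ℝ] ℝ,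
              (∫ x in simT B₁, φs x * p x) = 0 ∧ (∫ x in simT B₂, φs x * p x) = 0) ∧
            Real.sqrt (energySq κ (interior (simT B₁ ∪ simT B₂)) φs)
              ≤ C * (μH[(d : ℝ) - 1] (simT B₁ ∩ simT B₂)).toReal ^ (-(1 / 2 : ℝ))
                  * Real.sqrt (max (max (Metric.diam (simT B₁))
                      (Metric.diam (simT B₂)))⁻¹ κ) := by
  obtain ⟨m, rfl⟩ : ∃ m, d = m + 1 := ⟨d - 1, by lia⟩
  have hdim : ((m + 1 : ℕ) : ℝ) - 1 = m := by push_cast; ring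
  have hV : 0 < (μH[(m : ℝ)] (ball (0 : Euc m) 1)).toReal :=
    ENNReal.toReal_pos (measure_ball_pos _ _ one_pos).ne' measure_ball_lt_top.ne
  have hC := faceDualEnergyConst_pos m
  set K := max 1 (4 * (m + 1 : ℕ) * (μ + 2 * μ ^ 2))
  have hK : 1 ≤ K := le_max_left _ _
  refine ⟨√(faceDualEnergyConst m * K ^ (m + 1) * (μH[(m : ℝ)] (ball (0 : Euc m) 1)).toReal),
    by positivity, fun κ hκ B₁ B₂ _ hμ₁ hμ₂ z₁ z₂ hF₁ hF₂ ↦ ?_⟩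
  obtain ⟨e, ρ, hρ, hchart, hball, hscale⟩ :=
    exists_isInterfaceChart_of_diam_le_mul_inradius (by lia) hμ₁ hμ₂ hF₁ hF₂
  have hT₁ := (isCompact_simT B₁).measurableSet
  have hT₂ := (isCompact_simT B₂).measurableSet
  have hh : 0 < max (diam (simT B₁)) (diam (simT B₂)) :=
    lt_max_of_lt_left ((diam_simFace_pos B₁ z₁ hd).trans_le (diam_simFace_le B₁ z₁))
  rw [hdim]
  exact ⟨faceDual e ρ κ, ⟨_, faceDual.lipschitzWith e κ hρ⟩,
    fun x ↦ hchart.faceDual_eq_zero_of_notMem hρ,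
    hchart.setIntegral_inter_faceDual hρ hT₁ hT₂,
    fun p ↦ ⟨hchart.setIntegral_left_faceDual_mul_affine hρ hT₁ p,
      hchart.setIntegral_right_faceDual_mul_affine hρ hT₂ p⟩,
    hchart.sqrt_energySq_faceDual_le hρ hκ.le hT₁ hT₂ hh hball hK
      (hscale.trans (mul_le_mul_of_nonneg_right (le_max_right _ _) hρ.le))⟩
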